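/- Let B = diag(b₁,...,bₙ) and κ ∈ ℝ. Suppose X, P : ℝ → M_{n,r}(ℝ) are differentiable curves which at time t satisfy XᵀX = I_r, XᵀP = 0, PᵀX = 0, and the equations X' = P - (1+2κ)XPᵀX, P' = (1+2κ)PXᵀP - B²X + 2BXXᵀBX + XΛ with Λ = XᵀB²X - 2XᵀBXXᵀBX - PᵀP. Then for every λ ∈ ℝ, at time t one has d/dt L(λ) = [L(λ), A(λ)], where L(λ) = (I_n - 2XXᵀ)B(I_n - 2XXᵀ) + 2λΦ + λ²B, A(λ) = -2Φ - λB, and Φ = PXᵀ - XPᵀ. (Lax representation with spectral parameter of the fourth-degree potential system on the invariant set Ψ⁻¹(0).) -/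

import Mathlib

open Matrix

/-- Entrywise derivative of a matrix-valued curve. -/
def HasMatDerivAt {m k : Type*} {E : Type*} [NormedAddCommGroup E] [NormedSpace ℝ E]
    (F : ℝ → Matrix m k E) (F' : Matrix m k E) (t : ℝ) : Prop :=
  ∀ i j, HasDerivAt (fun s => F s i j) (F' i j) t

/-- The Lax matrix `L(λ) = (I - 2XXᵀ)B(I - 2XXᵀ) + 2λΦ + λ²B` of the system with
the fourth-degree potential, where `Φ = PXᵀ - XPᵀ`. -/
def quarticLax {n r : ℕ} (B : Matrix (Fin n) (Fin n) ℝ)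
    (X P : Matrix (Fin n) (Fin r) ℝ) (lam : ℝ) : Matrix (Fin n) (Fin n) ℝ :=
  (1 - (2 : ℝ) • (X * Xᵀ)) * B * (1 - (2 : ℝ) • (X * Xᵀ))
    + (2 * lam) • (P * Xᵀ - X * Pᵀ) + (lam ^ 2) • B

/-- The matrix `A(λ) = -2Φ - λB` of the Lax pair. -/
def quarticLaxA {n r : ℕ} (B : Matrix (Fin n) (Fin n) ℝ)
    (X P : Matrix (Fin n) (Fin r) ℝ) (lam : ℝ) : Matrix (Fin n) (Fin n) ℝ :=
  -((2 : ℝ) • (P * Xᵀ - X * Pᵀ)) - lam • B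

theorem HasMatDerivAt.mul' {m k l : Type*} [Fintype k]
    {F : ℝ → Matrix m k ℝ} {F' : Matrix m k ℝ} {G : ℝ → Matrix k l ℝ} {G' : Matrix k l ℝ} {t : ℝ}
    (hF : HasMatDerivAt F F' t) (hG : HasMatDerivAt G G' t) :
    HasMatDerivAt (fun s => F s * G s) (F' * G t + F t * G') t := by
  intro i j
  simp only [Matrix.mul_apply, Matrix.add_apply, ← Finset.sum_add_distrib]
  exact HasDerivAt.fun_sum fun x _ => (hF i x).mul (hG x j)

theorem HasMatDerivAt.transpose' {m k : Type*}
    {F : ℝ → Matrix m k ℝ} {F' : Matrix m k ℝ} {t : ℝ}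
    (hF : HasMatDerivAt F F' t) : HasMatDerivAt (fun s => (F s)ᵀ) F'ᵀ t :=
  fun i j => hF j i

theorem HasMatDerivAt.add' {m k : Type*}
    {F G : ℝ → Matrix m k ℝ} {F' G' : Matrix m k ℝ} {t : ℝ}
    (hF : HasMatDerivAt F F' t) (hG : HasMatDerivAt G G' t) :
    HasMatDerivAt (fun s => F s + G s) (F' + G') t :=
  fun i j => (hF i j).add (hG i j)

theorem HasMatDerivAt.sub' {m k : Type*}
    {F G : ℝ → Matrix m k ℝ} {F' G' : Matrix m k ℝ} {t : ℝ}
    (hF : HasMatDerivAt F F' t) (hG : HasMatDerivAt G G' t) :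
    HasMatDerivAt (fun s => F s - G s) (F' - G') t :=
  fun i j => (hF i j).sub (hG i j)

theorem HasMatDerivAt.smul' {m k : Type*} (c : ℝ)
    {F : ℝ → Matrix m k ℝ} {F' : Matrix m k ℝ} {t : ℝ}
    (hF : HasMatDerivAt F F' t) :
    HasMatDerivAt (fun s => c • F s) (c • F') t :=
  fun i j => (hF i j).const_mul c

theorem HasMatDerivAt.const' {m k : Type*} (C : Matrix m k ℝ) (t : ℝ) :
    HasMatDerivAt (fun _ => C) 0 t :=
  fun i j => hasDerivAt_const t (C i j)

theorem quartic_algebra {R : Type*} [Ring R] [Algebra ℝ R] (B Q M N W : R) (lam : ℝ)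
    (hQM : Q * M = 0) (hMQ : M * Q = M) (hQN : Q * N = N) (hNQ : N * Q = 0)
    (hW : W = -(B * B * Q) + (2 : ℝ) • (B * Q * B * Q) + Q * B * B - (2 : ℝ) • (Q * B * Q * B)) :
    -((2 : ℝ) • (M + N)) * B * (1 - (2 : ℝ) • Q) + (1 - (2 : ℝ) • Q) * B * -((2 : ℝ) • (M + N))
      + (2 * lam) • W
    = ((1 - (2 : ℝ) • Q) * B * (1 - (2 : ℝ) • Q) + (2 * lam) • (M - N) + (lam ^ 2) • B)
        * (-((2 : ℝ) • (M - N)) - lam • B)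
      - (-((2 : ℝ) • (M - N)) - lam • B)
        * ((1 - (2 : ℝ) • Q) * B * (1 - (2 : ℝ) • Q) + (2 * lam) • (M - N) + (lam ^ 2) • B) := by
  have h1 : -((2 : ℝ) • (M + N)) = (2 : ℝ) • (M - N) * (1 - (2 : ℝ) • Q) := by
    simp only [mul_sub, sub_mul, smul_mul_assoc, mul_smul_comm, smul_sub, mul_one, hMQ, hNQ]
    module
  have h2 : -((2 : ℝ) • (M + N)) = (1 - (2 : ℝ) • Q) * -((2 : ℝ) • (M - N)) := by
    simp only [mul_sub, sub_mul, smul_mul_assoc, mul_smul_comm, smul_sub, one_mul, hQM, hQN,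
      mul_neg]
    module
  have h3 : -((2 : ℝ) • (M + N)) * B * (1 - (2 : ℝ) • Q)
      + (1 - (2 : ℝ) • Q) * B * -((2 : ℝ) • (M + N))
      = (2 : ℝ) • (M - N) * (1 - (2 : ℝ) • Q) * B * (1 - (2 : ℝ) • Q)
      + (1 - (2 : ℝ) • Q) * B * ((1 - (2 : ℝ) • Q) * -((2 : ℝ) • (M - N))) := by
    rw [← h1, ← h2]
  rw [h3, hW]
  generalize M - N = F
  simp only [mul_sub, sub_mul, mul_add, add_mul, smul_mul_assoc, mul_smul_comm, smul_sub, smul_add,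
    one_mul, mul_one, mul_neg, neg_mul, smul_neg, mul_assoc]
  module

/-- On the invariant set `XᵀP = PᵀX = 0`, the equations of motion
of the fourth-degree potential system imply the Lax equation
`d/dt L(λ) = [L(λ), A(λ)]` for every `λ ∈ ℝ`. -/
theorem fourth_degree_lax_representation (n r : ℕ)
    (b : Fin n → ℝ) (B : Matrix (Fin n) (Fin n) ℝ) (hB : B = diagonal b) (κ : ℝ)
    (X P : ℝ → Matrix (Fin n) (Fin r) ℝ)
    (X' P' : Matrix (Fin n) (Fin r) ℝ) (t : ℝ)
    (hX : HasMatDerivAt X X' t) (hP : HasMatDerivAt P P' t)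
    (hc1 : (X t)ᵀ * X t = 1)
    (hc2 : (X t)ᵀ * P t = 0) (hc3 : (P t)ᵀ * X t = 0)
    (Λ : Matrix (Fin r) (Fin r) ℝ)
    (hΛ : Λ = (X t)ᵀ * (B * B) * X t
        - (2 : ℝ) • ((X t)ᵀ * B * X t * ((X t)ᵀ * B * X t)) - (P t)ᵀ * P t)
    (heqX : X' = P t - (1 + 2 * κ) • (X t * ((P t)ᵀ * X t)))
    (heqP : P' = (1 + 2 * κ) • (P t * ((X t)ᵀ * P t)) - B * B * X t
        + (2 : ℝ) • (B * X t * ((X t)ᵀ * B * X t)) + X t * Λ) :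
    ∀ lam : ℝ,
      HasMatDerivAt (fun s => quarticLax B (X s) (P s) lam)
        (quarticLax B (X t) (P t) lam * quarticLaxA B (X t) (P t) lam
          - quarticLaxA B (X t) (P t) lam * quarticLax B (X t) (P t) lam) t := by
  intro lam
  have hBt : Bᵀ = B := by rw [hB, diagonal_transpose]
  rw [hc3, Matrix.mul_zero, smul_zero, sub_zero] at heqX
  rw [hc2, Matrix.mul_zero, smul_zero, zero_sub] at heqP
  have hΛt : Λᵀ = Λ := by
    rw [hΛ]
    simp only [transpose_sub, transpose_smul, transpose_mul, transpose_transpose, hBt,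
      Matrix.mul_assoc]
  subst heqX
  have hQ := hX.mul' hX.transpose'
  have hS := (HasMatDerivAt.const' (1 : Matrix (Fin n) (Fin n) ℝ) t).sub' (hQ.smul' 2)
  have hL := (((hS.mul' (HasMatDerivAt.const' B t)).mul' hS).add'
    (((hP.mul' hX.transpose').sub' (hX.mul' hP.transpose')).smul' (2 * lam))).add'
    (HasMatDerivAt.const' ((lam ^ 2) • B) t)
  have key := quartic_algebra B (X t * (X t)ᵀ) (P t * (X t)ᵀ) (X t * (P t)ᵀ)
    (P' * (X t)ᵀ - X t * P'ᵀ) lam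
    (by rw [Matrix.mul_assoc, ← Matrix.mul_assoc _ (P t), hc2]; simp)
    (by rw [Matrix.mul_assoc, ← Matrix.mul_assoc _ (X t), hc1]; simp)
    (by rw [Matrix.mul_assoc, ← Matrix.mul_assoc _ (X t), hc1]; simp)
    (by rw [Matrix.mul_assoc, ← Matrix.mul_assoc _ (X t), hc3]; simp)
    (by
      rw [heqP]
      simp only [transpose_add, transpose_neg, transpose_smul, transpose_mul, transpose_transpose,
        hBt, hΛt, Matrix.mul_add, Matrix.add_mul, Matrix.neg_mul, Matrix.mul_neg, Matrix.smul_mul,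
        Matrix.mul_smul, Matrix.mul_assoc]
      module)
  unfold quarticLax quarticLaxA
  rw [← key]
  convert hL using 1
  simp only [zero_sub, Matrix.mul_zero, add_zero]
  congr 2
  abel
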